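/- Let G be a graph on n vertices, k ≥ 5 an integer, and 0 ≤ m ≤ k. Let z_1, ..., z_m be vertices of G such that the quantities n_1, ..., n_m determined by this m-tuple (as in the definition of the weight) are all positive. Then the sum of the weights w(D) over all good k-tuples D whose first m entries are z_1, ..., z_m is at most (n_1 n_2 ⋯ n_m)^{-1}. -/

import Mathlib

open Finset
open scoped Classical

/-- Index transposition swapping 0 and 1. -/
def swap01 (i : ℕ) : ℕ := if i = 0 then 1 else if i = 1 then 0 else i

/-- `y 0, y 1, …, y (k-1)` is an induced cycle of length `k` in `G`. -/
def IsInducedCycle {V : Type*} (G : SimpleGraph V) (k : ℕ) (y : ℕ → V) : Prop :=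
  (∀ i < k, ∀ j < k, y i = y j → i = j) ∧
  ∀ i < k, ∀ j < k, (G.Adj (y i) (y j) ↔ (i + 1) % k = j ∨ (j + 1) % k = i)

/-- `y 0, y 1, …, y (m-1)` is an induced path on `m` vertices in `G`. -/
def IsInducedPath {V : Type*} (G : SimpleGraph V) (m : ℕ) (y : ℕ → V) : Prop :=
  (∀ i < m, ∀ j < m, y i = y j → i = j) ∧
  ∀ i < m, ∀ j < m, (G.Adj (y i) (y j) ↔ i + 1 = j ∨ j + 1 = i)

/-- `(z 0, …, z (k-1))` is a good k-tuple: `z 1, z 0, z 2, …, z (k-1)` is an induced cycle. -/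
def IsGoodTuple {V : Type*} (G : SimpleGraph V) (k : ℕ) (z : ℕ → V) : Prop :=
  IsInducedCycle G k (fun i => z (swap01 i))

/-- The sequence `z 1, z 0, z 2, …, z (i-2), x` of length `i`. -/
def extSeq {V : Type*} (z : ℕ → V) (i : ℕ) (x : V) : ℕ → V :=
  fun p => if p = i - 1 then x else z (swap01 p)

/-- The quantity `n_i` associated with the (prefix of the) tuple `z`. -/
noncomputable def nq {V : Type*} (G : SimpleGraph V) (k : ℕ) (z : ℕ → V) (i : ℕ) : ℕ :=
  if i = 1 then Nat.card V
  else if i = 2 then Nat.card {x : V // G.Adj (z 0) x}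
  else if i = 3 then Nat.card {x : V // G.Adj (z 0) x ∧ ¬ G.Adj (z 1) x}
  else if i < k then Nat.card {x : V // IsInducedPath G i (extSeq z i x)}
  else Nat.card {x : V // IsInducedCycle G k (extSeq z k x)}

/-- The weight `w(D) = ∏_{i=1}^k 1/n_i` of a tuple. -/
noncomputable def wt {V : Type*} (G : SimpleGraph V) (k : ℕ) (z : ℕ → V) : ℝ :=
  ∏ i ∈ Finset.Icc 1 k, ((nq G k z i : ℝ))⁻¹

/-- View a `Fin k`-tuple as an `ℕ`-indexed tuple. -/
def tupFun {V : Type*} {k : ℕ} (hk : 0 < k) (z : Fin k → V) : ℕ → V :=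
  fun i => z ⟨i % k, Nat.mod_lt i hk⟩

/-- The good tuple `D_j = (v_j, v_{j-1}, v_{j+1}, …, v_{j+k-2})` (0-indexed `j`, indices mod `k`). -/
def Dtup {V : Type*} (k : ℕ) (v : ℕ → V) (j : ℕ) : ℕ → V :=
  fun p => if p = 0 then v (j % k)
    else if p = 1 then v ((j + k - 1) % k)
    else v ((j + p - 1) % k)

/-! Build a tuple one vertex at a time, choosing the `i`-th vertex uniformly among the `n_i`
candidates that the earlier vertices allow. Every vertex of a good tuple is a candidate at its turn,
so `w(D)` is the probability that this process outputs `D`. Once `z_1, …, z_m` have been chosen, the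
probabilities of the possible completions add up to at most `1`. -/

section SequentialChoice

variable {ι α 𝕜 : Type*} [Field 𝕜] [LinearOrder 𝕜] [IsStrictOrderedRing 𝕜]

theorem sum_inv_card_mul_le_one {s : Finset ι} {A : Finset α} {g : ι → α} {f : ι → 𝕜}
    (hg : ∀ D ∈ s, g D ∈ A) (hf : ∀ a ∈ A, ∑ D ∈ s with g D = a, f D ≤ 1) :
    ∑ D ∈ s, (#A : 𝕜)⁻¹ * f D ≤ 1 := by
  rw [← mul_sum, ← sum_fiberwise_of_maps_to hg]
  calc (#A : 𝕜)⁻¹ * ∑ a ∈ A, ∑ D ∈ s with g D = a, f D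
      ≤ (#A : 𝕜)⁻¹ * ∑ _a ∈ A, 1 := by gcongr with a ha; exact hf a ha
    _ = (#A : 𝕜)⁻¹ * #A := by simp
    _ ≤ 1 := inv_mul_le_one

theorem sum_prod_inv_card_le_one {s : Finset ι} {x : ι → ℕ → α} {C : ι → ℕ → Finset α} {m k : ℕ}
    (hmk : m ≤ k) (hmem : ∀ D ∈ s, ∀ i < k, x D i ∈ C D i)
    (hC : ∀ D ∈ s, ∀ E ∈ s, ∀ i < k, (∀ j < i, x D j = x E j) → C D i = C E i)
    (hinj : ∀ D ∈ s, ∀ E ∈ s, (∀ j < k, x D j = x E j) → D = E)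
    (hpre : ∀ D ∈ s, ∀ E ∈ s, ∀ j < m, x D j = x E j) :
    ∑ D ∈ s, ∏ i ∈ Ico m k, (#(C D i) : 𝕜)⁻¹ ≤ 1 := by
  induction hmk using Nat.decreasingInduction generalizing s with
  | self =>
    have hs : #s ≤ 1 := card_le_one.2 fun D hD E hE => hinj D hD E hE (hpre D hD E hE)
    simpa using hs
  | of_succ m hmk ih =>
    obtain rfl | ⟨E, hE⟩ := s.eq_empty_or_nonempty
    · simp
    have hCE : ∀ D ∈ s, C D m = C E m := fun D hD => hC D hD E hE m hmk (hpre D hD E hE)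
    have hsplit : ∀ D ∈ s, ∏ i ∈ Ico m k, (#(C D i) : 𝕜)⁻¹ =
        (#(C E m) : 𝕜)⁻¹ * ∏ i ∈ Ico (m + 1) k, (#(C D i) : 𝕜)⁻¹ := fun D hD => by
      rw [prod_eq_prod_Ico_succ_bot hmk, hCE D hD]
    rw [sum_congr rfl hsplit]
    refine sum_inv_card_mul_le_one (g := (x · m)) (fun D hD => hCE D hD ▸ hmem D hD m hmk)
      fun a _ => ih ?_ ?_ ?_ ?_
    all_goals simp only [mem_filter]
    · exact fun D hD => hmem D hD.1
    · exact fun D hD F hF => hC D hD.1 F hF.1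
    · exact fun D hD F hF => hinj D hD.1 F hF.1
    · intro D hD F hF j hj
      obtain hj | rfl := Nat.lt_succ_iff_lt_or_eq.1 hj
      · exact hpre D hD.1 F hF.1 j hj
      · exact hD.2.trans hF.2.symm

end SequentialChoice

section InducedPathsAndCycles

variable {V : Type*} {G : SimpleGraph V} {k m n i : ℕ} {y y' z z' : ℕ → V}

theorem isInducedPath_congr (h : ∀ p < m, y p = y' p) :
    IsInducedPath G m y ↔ IsInducedPath G m y' := by
  simp +contextual only [IsInducedPath, h]

theorem isInducedCycle_congr (h : ∀ p < k, y p = y' p) :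
    IsInducedCycle G k y ↔ IsInducedCycle G k y' := by
  simp +contextual only [IsInducedCycle, h]

theorem IsInducedCycle.isInducedPath (hy : IsInducedCycle G k y) (hmk : m < k) :
    IsInducedPath G m y := by
  refine ⟨fun a ha b hb => hy.1 a (by omega) b (by omega), fun a ha b hb => ?_⟩
  rw [hy.2 a (by omega) b (by omega), Nat.mod_eq_of_lt (by omega), Nat.mod_eq_of_lt (by omega)]

theorem extSeq_congr (hi : 3 ≤ i) (hn : n ≤ i) (h : ∀ j, j + 1 < i → z j = z' j) (x : V)
    {p : ℕ} (hp : p < n) : extSeq z n x p = extSeq z' n x p := by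
  unfold extSeq
  split_ifs
  · rfl
  · exact h _ (by unfold swap01; split_ifs <;> omega)

theorem extSeq_self (hn : 2 ≤ n) (z : ℕ → V) :
    extSeq z (n + 1) (z n) = fun p => z (swap01 p) := by
  funext p
  unfold extSeq
  split_ifs with hp
  · rw [hp, Nat.add_sub_cancel, swap01, if_neg (by omega), if_neg (by omega)]
  · rfl

theorem IsGoodTuple.adj_zero_one (hz : IsGoodTuple G k z) (hk : 2 ≤ k) : G.Adj (z 0) (z 1) :=
  (hz.2 1 (by omega) 0 (by omega)).2 (.inr (Nat.mod_eq_of_lt (by omega)))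

theorem IsGoodTuple.adj_zero_two (hz : IsGoodTuple G k z) (hk : 3 ≤ k) : G.Adj (z 0) (z 2) :=
  (hz.2 1 (by omega) 2 (by omega)).2 (.inl (Nat.mod_eq_of_lt (by omega)))

theorem IsGoodTuple.not_adj_one_two (hz : IsGoodTuple G k z) (hk : 4 ≤ k) :
    ¬ G.Adj (z 1) (z 2) := fun h => by
  have hmod := (hz.2 0 (by omega) 2 (by omega)).1 h
  rw [Nat.mod_eq_of_lt (by omega), Nat.mod_eq_of_lt (by omega)] at hmod
  omega

end InducedPathsAndCycles

section Candidates

variable {V : Type*} {G : SimpleGraph V} {k i : ℕ} {z z' : ℕ → V}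

/-- The set of vertices counted by `n_i`, i.e. the admissible choices for the `i`-th vertex of a
tuple once the first `i - 1` are those of `z`. As for `nq`, the index `i` starts at `1`, so a good
tuple `z` has its `i`-th vertex `z (i - 1)` in this set. -/
def candidates (G : SimpleGraph V) (k : ℕ) (z : ℕ → V) (i : ℕ) : Set V :=
  if i = 1 then Set.univ
  else if i = 2 then {x | G.Adj (z 0) x}
  else if i = 3 then {x | G.Adj (z 0) x ∧ ¬ G.Adj (z 1) x}
  else if i < k then {x | IsInducedPath G i (extSeq z i x)}
  else {x | IsInducedCycle G k (extSeq z k x)}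

theorem ncard_candidates (G : SimpleGraph V) (k : ℕ) (z : ℕ → V) (i : ℕ) :
    (candidates G k z i).ncard = nq G k z i := by
  unfold candidates nq
  split_ifs
  · exact Set.ncard_univ V
  all_goals rfl

theorem candidates_congr (hi : 1 ≤ i) (h : ∀ j, j + 1 < i → z j = z' j) :
    candidates G k z i = candidates G k z' i := by
  unfold candidates
  split_ifs with h1 h2 h3 hik
  · rfl
  · rw [h 0 (by omega)]
  · rw [h 0 (by omega), h 1 (by omega)]
  · ext x
    exact isInducedPath_congr fun p => extSeq_congr (by omega) le_rfl h x
  · ext x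
    exact isInducedCycle_congr fun p => extSeq_congr (by omega) (by omega) h x

theorem nq_congr (hi : 1 ≤ i) (h : ∀ j, j + 1 < i → z j = z' j) : nq G k z i = nq G k z' i := by
  rw [← ncard_candidates, ← ncard_candidates, candidates_congr hi h]

theorem IsGoodTuple.mem_candidates (hz : IsGoodTuple G k z) (hk : 4 ≤ k) (hi : i < k) :
    z i ∈ candidates G k z (i + 1) := by
  unfold candidates
  split_ifs with h1 h2 h3 hik
  · trivial
  · obtain rfl : i = 1 := by omega
    exact hz.adj_zero_one (by omega)
  · obtain rfl : i = 2 := by omega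
    exact ⟨hz.adj_zero_two (by omega), hz.not_adj_one_two hk⟩
  · have hpath : IsInducedPath G (i + 1) fun p => z (swap01 p) :=
      IsInducedCycle.isInducedPath hz hik
    rwa [← extSeq_self (n := i) (by omega)] at hpath
  · obtain rfl : k = i + 1 := by omega
    rwa [IsGoodTuple, ← extSeq_self (n := i) (by omega)] at hz

end Candidates

section Weights

variable {V : Type*} {G : SimpleGraph V} {k m : ℕ} {z t : ℕ → V}

theorem tupFun_of_lt (hk : 0 < k) (D : Fin k → V) {i : ℕ} (hi : i < k) :
    tupFun hk D i = D ⟨i, hi⟩ := by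
  simp only [tupFun, Nat.mod_eq_of_lt hi]

theorem prod_nq_mul_wt_le (hmk : m ≤ k) (h : ∀ j < m, t j = z j) :
    (∏ i ∈ Icc 1 m, (nq G k z i : ℝ)) * wt G k t ≤ ∏ i ∈ Ico m k, (nq G k t (i + 1) : ℝ)⁻¹ := by
  have hprefix : ∏ i ∈ Icc 1 m, (nq G k t i : ℝ) = ∏ i ∈ Icc 1 m, (nq G k z i : ℝ) :=
    prod_congr rfl fun i hi => by
      rw [mem_Icc] at hi
      rw [nq_congr hi.1 fun j hj => h j (by omega)]
  have hwt : wt G k t =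
      (∏ i ∈ Icc 1 m, (nq G k z i : ℝ))⁻¹ * ∏ i ∈ Ico m k, (nq G k t (i + 1) : ℝ)⁻¹ := by
    rw [wt, ← hprefix, ← prod_inv_distrib, ← Ico_add_one_right_eq_Icc, ← Ico_add_one_right_eq_Icc,
      prod_Ico_add' (fun i => (nq G k t i : ℝ)⁻¹), prod_Ico_consecutive _ (by omega) (by omega)]
  rw [hwt, ← mul_assoc]
  exact mul_le_of_le_one_left (by positivity) mul_inv_le_one

end Weights

/-- Stated as a product, since `(n_1 ⋯ n_m)⁻¹` is the junk value `0` when some `n_i` vanishes. -/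
theorem sum_weights_prefix_le_general {V : Type*} [Fintype V] (G : SimpleGraph V) {k m : ℕ}
    (hk : 4 ≤ k) (hm : m ≤ k) (z : ℕ → V) :
    (∏ i ∈ Icc 1 m, (nq G k z i : ℝ)) *
      ∑ D : Fin k → V with
        IsGoodTuple G k (tupFun (by omega) D) ∧ ∀ i : Fin k, (i : ℕ) < m → D i = z i,
        wt G k (tupFun (by omega) D) ≤ 1 := by
  have hk₀ : 0 < k := by omega
  set s := univ.filter fun D : Fin k → V =>
    IsGoodTuple G k (tupFun hk₀ D) ∧ ∀ i : Fin k, (i : ℕ) < m → D i = z i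
  have hprefix : ∀ D ∈ s, ∀ j < m, tupFun hk₀ D j = z j := fun D hD j hj => by
    rw [tupFun_of_lt hk₀ D (hj.trans_le hm)]
    exact (mem_filter.1 hD).2.2 ⟨j, hj.trans_le hm⟩ hj
  have hcompletions : ∑ D ∈ s, ∏ i ∈ Ico m k, (nq G k (tupFun hk₀ D) (i + 1) : ℝ)⁻¹ ≤ 1 := by
    simp only [← ncard_candidates, Set.ncard_eq_toFinset_card']
    refine sum_prod_inv_card_le_one (x := tupFun hk₀) hm ?_ ?_ ?_ ?_
    · exact fun D hD i hi => Set.mem_toFinset.2 ((mem_filter.1 hD).2.1.mem_candidates hk hi)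
    · intro D _ E _ i _ h
      have hC := candidates_congr (G := G) (k := k) (i := i + 1) (by omega)
        fun j hj => h j (by omega)
      simp only [hC]
    · exact fun D _ E _ h => funext fun i => by
        simpa only [tupFun_of_lt hk₀ _ i.isLt] using h i i.isLt
    · exact fun D hD E hE j hj => (hprefix D hD j hj).trans (hprefix E hE j hj).symm
  rw [mul_sum]
  exact (sum_le_sum fun D hD => prod_nq_mul_wt_le hm (hprefix D hD)).trans hcompletions

/-- Let `G` be a graph on `n` vertices, `k ≥ 5` and `0 ≤ m ≤ k`. If
`z 0, …, z (m-1)` are vertices of `G` whose associated quantities `n_1, …, n_m` are all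
positive, then the sum of the weights `w(D)` over all good `k`-tuples `D` whose first `m`
entries are `z 0, …, z (m-1)` is at most `(n_1 ⋯ n_m)⁻¹`. -/
theorem sum_weights_prefix_le {V : Type} [Fintype V] (G : SimpleGraph V) (n k m : ℕ)
    (hn : Fintype.card V = n) (hk : 5 ≤ k) (hm : m ≤ k) (z : ℕ → V)
    (hpos : ∀ i, 1 ≤ i → i ≤ m → 0 < nq G k z i) :
    ∑ D ∈ Finset.univ.filter (fun D : Fin k → V =>
        IsGoodTuple G k (tupFun (by omega) D) ∧ ∀ i : Fin k, (i : ℕ) < m → D i = z i),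
        wt G k (tupFun (by omega) D)
      ≤ (∏ i ∈ Finset.Icc 1 m, (nq G k z i : ℝ))⁻¹ := by
  rw [← one_div, le_div_iff₀' (prod_pos fun i hi => Nat.cast_pos.2 <|
    hpos i (mem_Icc.1 hi).1 (mem_Icc.1 hi).2)]
  exact sum_weights_prefix_le_general G (by omega) hm z
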